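/- arXiv:1603.07061 — 2 statements merged into one kernel-verified Lean document; each statement's English description precedes it below -/
import Mathlib

section
/- Let u : S¹ → ℝ be smooth with Fourier series u(θ) = Σ_{n∈ℤ} c_n e^{inθ}, c₀ = 0, and let F = −u·u″ − H(u·H(u″)). Let Φ(z) = Σ_{n=1}^∞ c_n zⁿ (holomorphic on the closed unit disc since u is smooth) and Υ(w,z) = (Φ(w) − Φ(z))/(w − z), extended holomorphically by Υ(z,z) = Φ′(z). Then for every θ, F(θ) = (1/π) ∫₀^{2π} |Υ(e^{iθ}, e^{iψ})|² dψ + (4/π) ∬_𝔻 |∂_w Υ(w, e^{iθ})|² dA(w), where dA is Lebesgue area measure on the open unit disc 𝔻. -/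
open MeasureTheory Real

/-- The `n`-th Fourier coefficient of a `2π`-periodic function `f : ℝ → ℝ`. -/
noncomputable def fourierC (f : ℝ → ℝ) (n : ℤ) : ℂ :=
  (1 / (2 * π)) * ∫ θ in (0:ℝ)..(2 * π), (f θ : ℂ) * Complex.exp (-Complex.I * (n : ℂ) * (θ : ℂ))

/-- The Hilbert transform on the circle, sending `Σ cₙ e^{inθ}` to `Σ (−i sgn n) cₙ e^{inθ}`. -/
noncomputable def hilbertT (f : ℝ → ℝ) (θ : ℝ) : ℝ :=
  (∑' n : ℤ, -Complex.I * ((n.sign : ℤ) : ℂ) * fourierC f n *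
    Complex.exp (Complex.I * (n : ℂ) * (θ : ℂ))).re

/-- The function `F = −u·u″ − H(u·H(u″))`. -/
noncomputable def Fmagic (u : ℝ → ℝ) (θ : ℝ) : ℝ :=
  -(u θ * deriv (deriv u) θ) - hilbertT (fun x => u x * hilbertT (deriv (deriv u)) x) θ

/-- The holomorphic function `Φ(z) = Σ_{n≥1} cₙ zⁿ` built from the positive Fourier
coefficients of `u`. -/
noncomputable def PhiOf (u : ℝ → ℝ) (z : ℂ) : ℂ :=
  ∑' n : ℕ, fourierC u ((n : ℤ) + 1) * z ^ (n + 1)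

/-- The difference quotient `Υ(w,z) = (Φ(w) − Φ(z))/(w − z)`, extended by `Υ(z,z) = Φ′(z)`. -/
noncomputable def UpsOf (u : ℝ → ℝ) (w z : ℂ) : ℂ :=
  if w = z then deriv (PhiOf u) z else (PhiOf u w - PhiOf u z) / (w - z)


/-! ### Absolutely convergent trigonometric series -/

lemma norm_cexp_I_int (k : ℤ) (x : ℝ) : ‖Complex.exp (Complex.I * (k : ℂ) * (x : ℂ))‖ = 1 := by
  have : Complex.I * (k : ℂ) * (x : ℂ) = (((k : ℝ) * x : ℝ) : ℂ) * Complex.I := by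
    push_cast; ring
  rw [this, Complex.norm_exp_ofReal_mul_I]

lemma integral_cexp_period (k : ℤ) (a : ℝ) :
    ∫ x in a..(a + 2 * π), Complex.exp (Complex.I * (k : ℂ) * (x : ℂ))
      = if k = 0 then (2 * π : ℂ) else 0 := by
  split_ifs with h
  · subst h
    simp
  · have hk : Complex.I * (k : ℂ) ≠ 0 := mul_ne_zero Complex.I_ne_zero (by exact_mod_cast h)
    rw [integral_exp_mul_complex hk]
    have : Complex.exp (Complex.I * (k : ℂ) * ((a + 2 * π : ℝ) : ℂ))
        = Complex.exp (Complex.I * (k : ℂ) * (a : ℂ)) := by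
      rw [Complex.exp_eq_exp_iff_exists_int]
      exact ⟨k, by push_cast; ring⟩
    rw [this]; simp

lemma integral_tsum_trig {ι : Type*} [Countable ι] (d : ι → ℂ) (hd : Summable (fun i => ‖d i‖))
    (k : ι → ℤ) (a : ℝ) :
    ∫ x in a..(a + 2 * π), ∑' i, d i * Complex.exp (Complex.I * (k i : ℂ) * (x : ℂ))
      = 2 * π * ∑' i, if k i = 0 then d i else 0 := by
  have h := intervalIntegral.hasSum_integral_of_dominated_convergence (μ := volume)
    (a := a) (b := a + 2 * π)
    (F := fun i x => d i * Complex.exp (Complex.I * (k i : ℂ) * (x : ℂ)))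
    (f := fun x => ∑' i, d i * Complex.exp (Complex.I * (k i : ℂ) * (x : ℂ)))
    (fun i _ => ‖d i‖)
    (fun i => (by fun_prop : Continuous _).aestronglyMeasurable)
    (fun i => Filter.Eventually.of_forall fun x _ => by rw [norm_mul, norm_cexp_I_int, mul_one])
    (Filter.Eventually.of_forall fun x _ => hd)
    (by simp)
    (Filter.Eventually.of_forall fun x _ => by
      apply Summable.hasSum
      apply Summable.of_norm
      simpa [norm_mul, norm_cexp_I_int] using hd)
  rw [← h.tsum_eq, ← tsum_mul_left]
  congr 1; ext i
  rw [intervalIntegral.integral_const_mul, integral_cexp_period]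
  split_ifs <;> ring

lemma summable_trig {ι : Type*} {d : ι → ℂ} (hd : Summable (fun i => ‖d i‖))
    (k : ι → ℤ) (x : ℝ) :
    Summable (fun i => d i * Complex.exp (Complex.I * (k i : ℂ) * (x : ℂ))) := by
  apply Summable.of_norm
  simpa [norm_mul, norm_cexp_I_int] using hd

lemma fourierC_of_tsum {ι : Type*} [Countable ι] (d : ι → ℂ) (hd : Summable (fun i => ‖d i‖))
    (k : ι → ℤ) (f : ℝ → ℝ)
    (hf : ∀ x : ℝ, (f x : ℂ) = ∑' i, d i * Complex.exp (Complex.I * (k i : ℂ) * (x : ℂ))) (n : ℤ) :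
    fourierC f n = ∑' i, if k i = n then d i else 0 := by
  have h := integral_tsum_trig d hd (fun i => k i - n) 0
  have e : ∀ x : ℝ, (f x : ℂ) * Complex.exp (-Complex.I * (n : ℂ) * (x : ℂ))
      = ∑' i, d i * Complex.exp (Complex.I * ((k i - n : ℤ) : ℂ) * (x : ℂ)) := by
    intro x
    rw [hf, ← tsum_mul_right]
    congr 1; ext i
    rw [mul_assoc, ← Complex.exp_add]
    congr 2; push_cast; ring
  unfold fourierC
  simp_rw [e]
  rw [zero_add] at h
  rw [h, ← mul_assoc]
  have : (π : ℂ) ≠ 0 := by exact_mod_cast Real.pi_ne_zero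
  have hc : (1 / (2 * π) : ℂ) * (2 * π) = 1 := by field_simp
  rw [hc, one_mul]
  refine tsum_congr fun i => ?_
  by_cases hi : k i = n
  · rw [if_pos hi, if_pos (by omega)]
  · rw [if_neg hi, if_neg (by omega)]

lemma hilbertT_of_tsum {ι : Type*} [Countable ι] (d : ι → ℂ) (hd : Summable (fun i => ‖d i‖))
    (k : ι → ℤ) (f : ℝ → ℝ)
    (hf : ∀ x : ℝ, (f x : ℂ) = ∑' i, d i * Complex.exp (Complex.I * (k i : ℂ) * (x : ℂ))) (θ : ℝ) :
    hilbertT f θ = (∑' i, -Complex.I * (((k i).sign : ℤ) : ℂ) * d i *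
      Complex.exp (Complex.I * (k i : ℂ) * (θ : ℂ))).re := by
  have hs : Summable (fun i => -Complex.I * (((k i).sign : ℤ) : ℂ) * d i *
      Complex.exp (Complex.I * (k i : ℂ) * (θ : ℂ))) := by
    apply Summable.of_norm_bounded hd
    intro i
    rw [norm_mul, norm_cexp_I_int, mul_one, norm_mul, norm_mul, norm_neg, Complex.norm_I, one_mul]
    apply mul_le_of_le_one_left (norm_nonneg _)
    rcases lt_trichotomy (k i) 0 with h | h | h
    · simp [Int.sign_eq_neg_one_of_neg h]
    · simp [h]
    · simp [Int.sign_eq_one_of_pos h]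
  have h2 := hs.hasSum.tsum_fiberwise k
  unfold hilbertT
  rw [← h2.tsum_eq]
  congr 2; ext n
  rw [fourierC_of_tsum d hd k f hf n]
  have : ∀ b : (k ⁻¹' {n} : Set ι), -Complex.I * (((k b).sign : ℤ) : ℂ) * d b *
      Complex.exp (Complex.I * (k b : ℂ) * (θ : ℂ)) = -Complex.I * ((n.sign : ℤ) : ℂ) * d b *
      Complex.exp (Complex.I * (n : ℂ) * (θ : ℂ)) := by
    rintro ⟨b, rfl⟩; rfl
  have hx : ∑' i, (if k i = n then d i else 0) = ∑' i : (k ⁻¹' {n} : Set ι), d i := by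
    rw [tsum_subtype (k ⁻¹' {n}) d]
    refine tsum_congr fun i => ?_
    by_cases hi : k i = n <;> simp [hi]
  rw [hx, tsum_congr this, tsum_mul_right, tsum_mul_left]

/-- Parseval for absolutely convergent power series on the circle. -/
lemma parseval_nat (b : ℕ → ℂ) (hb : Summable (fun j => ‖b j‖)) (a : ℝ) :
    ∫ x in a..(a + 2 * π), ‖∑' j, b j * Complex.exp (Complex.I * (x : ℂ)) ^ j‖ ^ 2
      = 2 * π * ∑' j, ‖b j‖ ^ 2 := by
  have hb' : Summable (fun j => ‖(starRingEnd ℂ) (b j)‖) := by simpa using hb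
  have hd : Summable (fun p : ℕ × ℕ => ‖b p.1 * (starRingEnd ℂ) (b p.2)‖) := by
    simpa [norm_mul] using hb.mul_of_nonneg hb (fun _ => norm_nonneg _) (fun _ => norm_nonneg _)
  have h := integral_tsum_trig (fun p : ℕ × ℕ => b p.1 * (starRingEnd ℂ) (b p.2)) hd
    (fun p => (p.1 : ℤ) - p.2) a
  have e : ∀ x : ℝ, ∑' p : ℕ × ℕ, b p.1 * (starRingEnd ℂ) (b p.2) *
      Complex.exp (Complex.I * (((p.1 : ℤ) - (p.2 : ℤ) : ℤ) : ℂ) * (x : ℂ))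
      = ((‖∑' j, b j * Complex.exp (Complex.I * (x : ℂ)) ^ j‖ ^ 2 : ℝ) : ℂ) := by
    intro x
    have hx : ‖Complex.exp (Complex.I * (x : ℂ))‖ = 1 := by
      simp [Complex.norm_exp]
    rw [← Complex.normSq_eq_norm_sq, Complex.normSq_eq_conj_mul_self, mul_comm, Complex.conj_tsum,
      tsum_mul_tsum_of_summable_norm (by simpa [hx] using hb) (by simpa [hx] using hb)]
    congr 1; ext p
    rw [map_mul, map_pow, ← Complex.exp_conj]
    simp only [map_mul, Complex.conj_I, Complex.conj_ofReal]
    rw [mul_mul_mul_comm, ← Complex.exp_nat_mul, ← Complex.exp_nat_mul, ← Complex.exp_add]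
    congr 2; push_cast; ring
  simp_rw [e] at h
  rw [intervalIntegral.integral_ofReal] at h
  have e2 : ∑' p : ℕ × ℕ, (if ((p.1 : ℤ) - p.2) = 0 then b p.1 * (starRingEnd ℂ) (b p.2) else 0)
      = ((∑' j, ‖b j‖ ^ 2 : ℝ) : ℂ) := by
    have inj : Function.Injective (fun j : ℕ => (j, j)) := fun i j h => (Prod.ext_iff.1 h).1
    rw [← inj.tsum_eq]
    · rw [Complex.ofReal_tsum]
      congr 1; ext j
      simp [Complex.mul_conj, Complex.normSq_eq_norm_sq]
    · intro p hp
      simp only [Function.mem_support, ne_eq, ite_eq_right_iff, Classical.not_imp] at hp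
      refine ⟨p.1, ?_⟩
      ext
      · rfl
      · show p.1 = p.2
        omega
  rw [e2] at h
  exact_mod_cast h

/-! ### Fourier coefficients of smooth periodic functions -/

lemma fourierC_deriv (f : ℝ → ℝ) (hf : ContDiff ℝ (⊤ : ℕ∞) f)
    (hper : ∀ θ : ℝ, f (θ + 2 * π) = f θ) (n : ℤ) :
    fourierC (deriv f) n = Complex.I * n * fourierC f n := by
  have hd : Differentiable ℝ f := hf.differentiable (by simp)
  have hc : Continuous (deriv f) := hf.continuous_deriv (by simp)
  have h1 : ∀ x : ℝ, HasDerivAt (fun x : ℝ => Complex.exp (-Complex.I * (n : ℂ) * (x : ℂ)))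
      (Complex.exp (-Complex.I * (n : ℂ) * (x : ℂ)) * (-Complex.I * (n : ℂ))) x := by
    intro x
    have := ((Complex.ofRealCLM.hasDerivAt (x := x)).const_mul (-Complex.I * (n : ℂ))).cexp
    simpa using this
  have h2 : ∀ x : ℝ, HasDerivAt (fun x : ℝ => (f x : ℂ)) ((deriv f x : ℝ) : ℂ) x := fun x =>
    (hd x).hasDerivAt.ofReal_comp
  have h := intervalIntegral.integral_mul_deriv_eq_deriv_mul (a := 0) (b := 2 * π)
    (fun x _ => h1 x) (fun x _ => h2 x)
    (Continuous.intervalIntegrable (by fun_prop) _ _)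
    (Continuous.intervalIntegrable (by fun_prop) _ _)
  have e1 : Complex.exp (-Complex.I * (n : ℂ) * ((2 * π : ℝ) : ℂ)) = 1 := by
    rw [Complex.exp_eq_one_iff]
    exact ⟨-n, by push_cast; ring⟩
  have e2 : f (2 * π) = f 0 := by simpa using hper 0
  rw [e1, e2] at h
  simp only [Complex.ofReal_zero, mul_zero, Complex.exp_zero, sub_self, zero_sub] at h
  unfold fourierC
  simp_rw [mul_comm ((deriv f _ : ℝ) : ℂ)]
  rw [h, ← intervalIntegral.integral_neg, ← mul_assoc, mul_comm (Complex.I * (n : ℂ)), mul_assoc,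
    ← intervalIntegral.integral_const_mul (Complex.I * (n : ℂ))]
  congr 2; ext x; ring

lemma deriv_periodic (f : ℝ → ℝ) (hper : ∀ θ : ℝ, f (θ + 2 * π) = f θ) (θ : ℝ) :
    deriv f (θ + 2 * π) = deriv f θ := by
  rw [← deriv_comp_add_const]
  congr 1; ext x; exact hper x

lemma fourierC_bdd (f : ℝ → ℝ) : ∃ M, ∀ n, ‖fourierC f n‖ ≤ M := by
  refine ⟨‖(1 / (2 * π) : ℂ)‖ * |∫ x in (0:ℝ)..(2 * π), ‖(f x : ℂ)‖|, fun n => ?_⟩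
  unfold fourierC
  rw [norm_mul]
  gcongr
  refine intervalIntegral.norm_integral_le_abs_integral_norm.trans ?_
  apply le_of_eq
  congr 2; ext x
  have := norm_cexp_I_int (-n) x
  rw [norm_mul]
  have e : -Complex.I * (n : ℂ) * (x : ℂ) = Complex.I * ((-n : ℤ) : ℂ) * (x : ℂ) := by
    push_cast; ring
  rw [e, this, mul_one]

lemma fourierC_neg (f : ℝ → ℝ) (n : ℤ) :
    fourierC f (-n) = (starRingEnd ℂ) (fourierC f n) := by
  unfold fourierC
  rw [map_mul, intervalIntegral.integral_of_le (by positivity),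
    intervalIntegral.integral_of_le (by positivity), ← integral_conj]
  congr 1
  · have : (1 / (2 * π) : ℂ) = ((1 / (2 * π) : ℝ) : ℂ) := by push_cast; rfl
    rw [this, Complex.conj_ofReal]
  · congr 1; ext x
    rw [map_mul, ← Complex.exp_conj]
    simp

lemma contDiff_deriv' {f : ℝ → ℝ} (hf : ContDiff ℝ (⊤ : ℕ∞) f) :
    ContDiff ℝ (⊤ : ℕ∞) (deriv f) := by
  exact (contDiff_infty_iff_deriv.1 hf).2

lemma fourierC_deriv2 (f : ℝ → ℝ) (hf : ContDiff ℝ (⊤ : ℕ∞) f)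
    (hper : ∀ θ : ℝ, f (θ + 2 * π) = f θ) (n : ℤ) :
    fourierC (deriv (deriv f)) n = - (n : ℂ) ^ 2 * fourierC f n := by
  rw [fourierC_deriv _ (contDiff_deriv' hf) (deriv_periodic f hper), fourierC_deriv f hf hper]
  linear_combination (n : ℂ) ^ 2 * fourierC f n * Complex.I_sq

lemma summable_sq_fourierC (f : ℝ → ℝ) (hf : ContDiff ℝ (⊤ : ℕ∞) f)
    (hper : ∀ θ : ℝ, f (θ + 2 * π) = f θ) :
    Summable (fun n : ℤ => (n : ℝ) ^ 2 * ‖fourierC f n‖) := by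
  obtain ⟨M, hM⟩ := fourierC_bdd (deriv (deriv (deriv (deriv f))))
  have hs : Summable (fun n : ℤ => M * (1 / (n : ℝ) ^ 2)) :=
    (Real.summable_one_div_int_pow.2 (by norm_num)).mul_left M
  refine Summable.of_nonneg_of_le (fun n => by positivity) (fun n => ?_) hs
  rcases eq_or_ne n 0 with rfl | hn
  · simp
  have hn' : (0:ℝ) < (n : ℝ) ^ 2 := by positivity
  have h := hM n
  rw [fourierC_deriv2 _ (contDiff_deriv' (contDiff_deriv' hf))
    (deriv_periodic _ (deriv_periodic f hper)), fourierC_deriv2 f hf hper] at h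
  rw [norm_mul, norm_mul, norm_neg, norm_pow] at h
  have e : ‖(n : ℂ)‖ ^ 2 = (n : ℝ) ^ 2 := by
    rw [← Complex.ofReal_intCast, Complex.norm_real, Real.norm_eq_abs, sq_abs]
  rw [e] at h
  rw [mul_one_div, le_div_iff₀ hn']
  linarith

lemma fourier_inversion (f : ℝ → ℝ) (hf : Continuous f)
    (hper : ∀ θ : ℝ, f (θ + 2 * π) = f θ) (hs : Summable (fun n => ‖fourierC f n‖)) (x : ℝ) :
    (f x : ℂ) = ∑' n : ℤ, fourierC f n * Complex.exp (Complex.I * (n : ℂ) * (x : ℂ)) := by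
  have : Fact (0 < 2 * π) := ⟨by positivity⟩
  have hp : Function.Periodic (fun x => (f x : ℂ)) (2 * π) := fun x => by simp [hper]
  let g : C(AddCircle (2 * π), ℂ) := ⟨hp.lift, by
    apply continuous_coinduced_dom.mpr
    exact Complex.continuous_ofReal.comp hf⟩
  have hg : ∀ x : ℝ, g (x : AddCircle (2 * π)) = f x := fun x => hp.lift_coe x
  have hpi : (π : ℂ) ≠ 0 := by exact_mod_cast Real.pi_ne_zero
  have hc : ∀ n, fourierCoeff g n = fourierC f n := by
    intro n
    rw [fourierCoeff_eq_intervalIntegral g n 0, zero_add]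
    unfold fourierC
    rw [Complex.real_smul]
    congr 1
    · push_cast; ring
    · congr 1; ext x
      rw [hg, fourier_coe_apply, smul_eq_mul, mul_comm]
      congr 2; push_cast; field_simp
  have h := has_pointwise_sum_fourier_series_of_summable (f := g)
    (by simp_rw [funext hc]; exact hs.of_norm) (x : AddCircle (2 * π))
  rw [hg] at h
  rw [← h.tsum_eq]
  congr 1; ext n
  rw [hc, fourier_coe_apply, smul_eq_mul]
  congr 2; push_cast; field_simp

/-! ### The combinatorial identity -/

lemma sum_odd_sq (m : ℕ) : ∑ j ∈ Finset.range m, (2 * (j : ℝ) + 1) = (m : ℝ) ^ 2 := by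
  induction m with
  | zero => simp
  | succ k ih => rw [Finset.sum_range_succ, ih]; push_cast; ring

lemma tail_sum_identity (A : ℕ → ℂ) (hA : Summable (fun n : ℕ => ((n : ℝ) + 1) ^ 2 * ‖A n‖)) :
    HasSum (fun j : ℕ => (2 * (j : ℝ) + 1) * ‖∑' n : ℕ, if j ≤ n then A n else 0‖ ^ 2)
      (∑' p : ℕ × ℕ, (starRingEnd ℂ) (A p.1) * A p.2 * ((min p.1 p.2 : ℕ) + 1 : ℂ) ^ 2).re := by
  have hA0 : Summable (fun n : ℕ => ‖A n‖) := by
    refine Summable.of_nonneg_of_le (fun n => norm_nonneg _) (fun n => ?_) hA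
    apply le_mul_of_one_le_left (norm_nonneg _)
    nlinarith [(Nat.cast_nonneg n : (0:ℝ) ≤ n)]
  have hAA : Summable (fun p : ℕ × ℕ =>
      (((p.1 : ℝ) + 1) ^ 2 * ‖A p.1‖) * (((p.2 : ℝ) + 1) ^ 2 * ‖A p.2‖)) :=
    hA.mul_of_nonneg hA (fun n => by positivity) (fun n => by positivity)
  let T : (ℕ × ℕ) × ℕ → ℂ := fun q => if q.2 ≤ q.1.1 ∧ q.2 ≤ q.1.2 then
    (2 * (q.2 : ℂ) + 1) * ((starRingEnd ℂ) (A q.1.1) * A q.1.2) else 0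
  have key : ∀ p : ℕ × ℕ, ∀ j, j ∉ Finset.range (min p.1 p.2 + 1) → T (p, j) = 0 := by
    intro p j hj
    simp only [Finset.mem_range, not_lt] at hj
    simp only [T]
    rw [if_neg]
    omega
  have key2 : ∀ p : ℕ × ℕ, ∀ j, j ∈ Finset.range (min p.1 p.2 + 1) →
      T (p, j) = (2 * (j : ℂ) + 1) * ((starRingEnd ℂ) (A p.1) * A p.2) := by
    intro p j hj
    simp only [Finset.mem_range] at hj
    simp only [T]
    rw [if_pos]
    omega
  have hT : Summable T := by
    apply Summable.of_norm
    rw [summable_prod_of_nonneg (fun _ => norm_nonneg _)]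
    constructor
    · intro p
      apply summable_of_ne_finset_zero (s := Finset.range (min p.1 p.2 + 1))
      intro j hj
      rw [key p j hj, norm_zero]
    · refine Summable.of_nonneg_of_le (fun n => tsum_nonneg fun _ => norm_nonneg _) (fun p => ?_) hAA
      rw [tsum_eq_sum (s := Finset.range (min p.1 p.2 + 1))
        (fun j hj => by rw [key p j hj, norm_zero])]
      have : ∀ j ∈ Finset.range (min p.1 p.2 + 1), ‖T (p, j)‖
          = (2 * (j : ℝ) + 1) * (‖A p.1‖ * ‖A p.2‖) := by
        intro j hj
        rw [key2 p j hj, norm_mul, norm_mul, RCLike.norm_conj]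
        congr 1
        have : (2 * (j : ℂ) + 1) = ((2 * (j : ℝ) + 1 : ℝ) : ℂ) := by push_cast; ring
        rw [this, Complex.norm_real, Real.norm_of_nonneg (by positivity)]
      rw [Finset.sum_congr rfl this, ← Finset.sum_mul, sum_odd_sq]
      have h1 : ((min p.1 p.2 + 1 : ℕ) : ℝ) ^ 2 ≤ ((p.1 : ℝ) + 1) ^ 2 := by
        have : ((min p.1 p.2 : ℕ) : ℝ) ≤ p.1 := by exact_mod_cast min_le_left _ _
        push_cast at this ⊢
        gcongr
      have h2 : (1 : ℝ) ≤ ((p.2 : ℝ) + 1) ^ 2 := by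
        nlinarith [(Nat.cast_nonneg p.2 : (0:ℝ) ≤ p.2)]
      calc _ ≤ ((p.1 : ℝ) + 1) ^ 2 * (‖A p.1‖ * (((p.2 : ℝ) + 1) ^ 2 * ‖A p.2‖)) := by
            gcongr
            exact le_mul_of_one_le_left (norm_nonneg _) h2
        _ = _ := by ring
  have e1 : ∑' q, T q = ∑' p : ℕ × ℕ,
      (starRingEnd ℂ) (A p.1) * A p.2 * ((min p.1 p.2 : ℕ) + 1 : ℂ) ^ 2 := by
    rw [hT.tsum_prod]
    congr 1; ext p
    rw [tsum_eq_sum (s := Finset.range (min p.1 p.2 + 1)) (fun j hj => key p j hj),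
      Finset.sum_congr rfl (key2 p), ← Finset.sum_mul, mul_comm]
    congr 1
    have := sum_odd_sq (min p.1 p.2 + 1)
    have := congrArg (fun x : ℝ => (x : ℂ)) this
    rw [Nat.cast_add, Nat.cast_one] at this
    simpa only [Complex.ofReal_sum, Complex.ofReal_add, Complex.ofReal_mul, Complex.ofReal_natCast,
      Complex.ofReal_one, Complex.ofReal_pow, Complex.ofReal_ofNat] using this
  have h2 : HasSum (fun q : ℕ × (ℕ × ℕ) => T (q.2, q.1)) (∑' q, T q) := by
    have := (Equiv.prodComm ℕ (ℕ × ℕ)).hasSum_iff.2 hT.hasSum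
    exact this
  have h3 := h2.prod_fiberwise (g := fun j : ℕ => (((2 * (j : ℝ) + 1) *
      ‖∑' n : ℕ, if j ≤ n then A n else 0‖ ^ 2 : ℝ) : ℂ)) (by
    intro j
    have hs : Summable (fun n => ‖if j ≤ n then A n else 0‖) := by
      refine Summable.of_nonneg_of_le (fun n => norm_nonneg _) (fun n => ?_) hA0
      split_ifs <;> simp
    have hs' : Summable (fun n => ‖(starRingEnd ℂ) (if j ≤ n then A n else 0)‖) := by
      simpa only [RCLike.norm_conj] using hs
    have hh := (summable_mul_of_summable_norm hs' hs).hasSum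
    rw [← tsum_mul_tsum_of_summable_norm hs' hs, ← Complex.conj_tsum,
      ← Complex.normSq_eq_conj_mul_self, Complex.normSq_eq_norm_sq] at hh
    have := hh.mul_left (2 * (j : ℂ) + 1)
    push_cast at this ⊢
    refine (congrArg (fun f => HasSum f _) (funext fun p => ?_)).mpr this
    simp only [T]
    by_cases h1 : j ≤ p.1 <;> by_cases h2 : j ≤ p.2 <;> simp [h1, h2])
  rw [e1] at h3
  simpa only [Complex.ofReal_re] using Complex.hasSum_re h3

lemma symm_identity (A : ℕ → ℂ) (hA : Summable (fun n : ℕ => ((n : ℝ) + 1) ^ 2 * ‖A n‖)) :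
    Summable (fun p : ℕ × ℕ => (starRingEnd ℂ) (A p.1) * A p.2 * ((p.2 : ℂ) + 1) ^ 2 *
      (1 + (((p.1 : ℤ) - p.2).sign : ℂ))) ∧
    (∑' p : ℕ × ℕ, (starRingEnd ℂ) (A p.1) * A p.2 * ((p.2 : ℂ) + 1) ^ 2 *
      (1 + (((p.1 : ℤ) - p.2).sign : ℂ))).re =
    (∑' p : ℕ × ℕ, (starRingEnd ℂ) (A p.1) * A p.2 * ((min p.1 p.2 : ℕ) + 1 : ℂ) ^ 2).re := by
  have hAA : Summable (fun p : ℕ × ℕ =>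
      (((p.1 : ℝ) + 1) ^ 2 * ‖A p.1‖) * (((p.2 : ℝ) + 1) ^ 2 * ‖A p.2‖)) :=
    hA.mul_of_nonneg hA (fun n => by positivity) (fun n => by positivity)
  set W : ℕ × ℕ → ℂ := fun p => (starRingEnd ℂ) (A p.1) * A p.2 * ((p.2 : ℂ) + 1) ^ 2 *
      (1 + (((p.1 : ℤ) - p.2).sign : ℂ)) with hW
  have hWs : Summable W := by
    apply Summable.of_norm_bounded (hAA.mul_left 2)
    intro p
    have e : ‖((p.2 : ℂ) + 1) ^ 2‖ = ((p.2 : ℝ) + 1) ^ 2 := by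
      have : ((p.2 : ℂ) + 1) = (((p.2 : ℝ) + 1 : ℝ) : ℂ) := by push_cast; ring
      rw [norm_pow, this, Complex.norm_real, Real.norm_of_nonneg (by positivity)]
    have e2 : ‖(1 + (((p.1 : ℤ) - p.2).sign : ℂ))‖ ≤ 2 := by
      rcases lt_trichotomy ((p.1 : ℤ) - p.2) 0 with h | h | h
      · simp [Int.sign_eq_neg_one_of_neg h]
      · simp [h]
      · rw [Int.sign_eq_one_of_pos h]; norm_num
    simp only [hW]
    rw [norm_mul, norm_mul, norm_mul, RCLike.norm_conj, e]
    have h2 : (1 : ℝ) ≤ ((p.1 : ℝ) + 1) ^ 2 := by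
      nlinarith [(Nat.cast_nonneg p.1 : (0:ℝ) ≤ p.1)]
    calc _ ≤ (((p.1 : ℝ) + 1) ^ 2 * ‖A p.1‖) * ‖A p.2‖ * ((p.2 : ℝ) + 1) ^ 2 * 2 := by
          gcongr
          exact le_mul_of_one_le_left (norm_nonneg _) h2
      _ = _ := by ring
  refine ⟨hWs, ?_⟩
  have h1 : HasSum (fun p : ℕ × ℕ => (starRingEnd ℂ) (W p.swap)) ((starRingEnd ℂ) (∑' p, W p)) := by
    rw [Complex.hasSum_conj, Complex.conj_conj]
    exact (Equiv.prodComm ℕ ℕ).hasSum_iff.2 hWs.hasSum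
  have h2 := hWs.hasSum.add h1
  have e : ∀ p, W p + (starRingEnd ℂ) (W p.swap) =
      2 * ((starRingEnd ℂ) (A p.1) * A p.2 * ((min p.1 p.2 : ℕ) + 1 : ℂ) ^ 2) := by
    intro p
    simp only [hW, Prod.fst_swap, Prod.snd_swap, map_mul, Complex.conj_conj, map_pow, map_add,
      map_one, Complex.conj_natCast, map_intCast]
    rcases lt_trichotomy p.1 p.2 with h | h | h
    · rw [Int.sign_eq_neg_one_of_neg (by omega), Int.sign_eq_one_of_pos (by omega),
        min_eq_left h.le]
      push_cast; ring
    · rw [h]; simp; ring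
    · rw [Int.sign_eq_one_of_pos (by omega), Int.sign_eq_neg_one_of_neg (by omega),
        min_eq_right h.le]
      push_cast; ring
  simp_rw [e] at h2
  have h3 := h2.tsum_eq
  rw [tsum_mul_left] at h3
  have := congrArg Complex.re h3
  simp at this
  linarith

lemma full_identity (a : ℤ → ℂ) (ha0 : a 0 = 0) (hneg : ∀ n, a (-n) = (starRingEnd ℂ) (a n))
    (hs : Summable (fun n : ℤ => (n : ℝ) ^ 2 * ‖a n‖)) :
    HasSum (fun j : ℕ => 2 * ((2 * (j : ℝ) + 1) *
        ‖∑' n : ℕ, if j ≤ n then a ((n : ℤ) + 1) else 0‖ ^ 2))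
      (∑' p : ℤ × ℤ, a p.1 * a p.2 * (p.2 : ℂ) ^ 2 *
        (1 - ((p.1 + p.2).sign : ℂ) * (p.2.sign : ℂ))).re := by
  have hA : Summable (fun n : ℕ => ((n : ℝ) + 1) ^ 2 * ‖a ((n : ℤ) + 1)‖) := by
    have inj : Function.Injective (fun n : ℕ => (n : ℤ) + 1) := fun i j h => by
      simpa using h
    have := hs.comp_injective inj
    simpa [Function.comp_def] using this
  have h1 := tail_sum_identity (fun n : ℕ => a ((n : ℤ) + 1)) hA
  obtain ⟨h2, h3⟩ := symm_identity (fun n : ℕ => a ((n : ℤ) + 1)) hA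
  have h4 := h1.mul_left 2
  rw [← h3] at h4
  refine (congrArg (HasSum _) ?_).mpr h4
  set G : ℤ × ℤ → ℂ := fun p => a p.1 * a p.2 * (p.2 : ℂ) ^ 2 *
        (1 - ((p.1 + p.2).sign : ℂ) * (p.2.sign : ℂ)) with hG
  let g : (ℕ × ℕ) ⊕ (ℕ × ℕ) → ℤ × ℤ := Sum.elim
    (fun p => (-((p.1 : ℤ) + 1), (p.2 : ℤ) + 1)) (fun p => ((p.1 : ℤ) + 1, -((p.2 : ℤ) + 1)))
  have ginj : Function.Injective g := by
    rintro (⟨p, q⟩ | ⟨p, q⟩) (⟨p', q'⟩ | ⟨p', q'⟩) h <;>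
      simp only [g, Sum.elim_inl, Sum.elim_inr, Prod.mk.injEq] at h
    · have h1 : p = p' := by omega
      have h2 : q = q' := by omega
      rw [h1, h2]
    · omega
    · omega
    · have h1 : p = p' := by omega
      have h2 : q = q' := by omega
      rw [h1, h2]
  have gsupp : ∀ x ∉ Set.range g, G x = 0 := by
    rintro ⟨m, n⟩ hx
    simp only [hG]
    rcases lt_trichotomy n 0 with hn | hn | hn
    · rcases lt_or_ge 0 m with hm | hm
      · exfalso; apply hx
        refine ⟨Sum.inr ((m - 1).toNat, (-n - 1).toNat), ?_⟩
        simp only [g, Sum.elim_inr, Prod.mk.injEq]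
        omega
      · rw [Int.sign_eq_neg_one_of_neg hn, Int.sign_eq_neg_one_of_neg (by omega)]
        simp
    · simp [hn, ha0]
    · rcases lt_or_ge m 0 with hm | hm
      · exfalso; apply hx
        refine ⟨Sum.inl ((-m - 1).toNat, (n - 1).toNat), ?_⟩
        simp only [g, Sum.elim_inl, Prod.mk.injEq]
        omega
      · rw [Int.sign_eq_one_of_pos hn, Int.sign_eq_one_of_pos (by omega)]
        simp
  have hl : HasSum (G ∘ g ∘ Sum.inl) (∑' p : ℕ × ℕ, (starRingEnd ℂ) (a ((p.1 : ℤ) + 1)) *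
      a ((p.2 : ℤ) + 1) * ((p.2 : ℂ) + 1) ^ 2 * (1 + (((p.1 : ℤ) - p.2).sign : ℂ))) := by
    convert h2.hasSum using 1
    ext p
    simp only [hG, g, Function.comp_apply, Sum.elim_inl, hneg]
    have e : -((p.1 : ℤ) + 1) + ((p.2 : ℤ) + 1) = -((p.1 : ℤ) - p.2) := by ring
    rw [e, Int.sign_neg, Int.sign_eq_one_of_pos (show (0 : ℤ) < (p.2 : ℤ) + 1 by omega)]
    push_cast; ring
  have hr : HasSum (G ∘ g ∘ Sum.inr) ((starRingEnd ℂ) (∑' p : ℕ × ℕ,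
      (starRingEnd ℂ) (a ((p.1 : ℤ) + 1)) *
      a ((p.2 : ℤ) + 1) * ((p.2 : ℂ) + 1) ^ 2 * (1 + (((p.1 : ℤ) - p.2).sign : ℂ)))) := by
    have := h2.hasSum
    rw [← Complex.conj_conj (tsum _)] at this
    have := Complex.hasSum_conj.2 this
    convert this using 1
    ext p
    simp only [hG, g, Function.comp_apply, Sum.elim_inr, hneg, map_mul, Complex.conj_conj, map_pow,
      map_add, map_one, Complex.conj_natCast, map_intCast]
    have e : ((p.1 : ℤ) + 1) + -((p.2 : ℤ) + 1) = ((p.1 : ℤ) - p.2) := by ring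
    rw [e, Int.sign_neg, Int.sign_eq_one_of_pos (show (0 : ℤ) < (p.2 : ℤ) + 1 by omega)]
    push_cast; ring
  have := (ginj.hasSum_iff gsupp).1 (HasSum.sum (f := G ∘ g) hl hr)
  rw [this.tsum_eq]
  simp; ring

/-! ### The double Fourier series of `F` -/

lemma norm_intCast_sq (n : ℤ) : ‖(n : ℂ) ^ 2‖ = (n : ℝ) ^ 2 := by
  rw [norm_pow, ← Complex.ofReal_intCast, Complex.norm_real, Real.norm_eq_abs, sq_abs]

lemma norm_sign_le (n : ℤ) : ‖((n.sign : ℤ) : ℂ)‖ ≤ 1 := by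
  rcases lt_trichotomy n 0 with h | h | h
  · simp [Int.sign_eq_neg_one_of_neg h]
  · simp [h]
  · simp [Int.sign_eq_one_of_pos h]

lemma tsum_trig_mul (c d : ℤ → ℂ) (hc : Summable fun n => ‖c n‖) (hd : Summable fun n => ‖d n‖)
    (x : ℝ) :
    (∑' n : ℤ, c n * Complex.exp (Complex.I * (n : ℂ) * (x : ℂ))) *
      (∑' n : ℤ, d n * Complex.exp (Complex.I * (n : ℂ) * (x : ℂ))) =
    ∑' p : ℤ × ℤ, (c p.1 * d p.2) *
      Complex.exp (Complex.I * ((p.1 + p.2 : ℤ) : ℂ) * (x : ℂ)) := by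
  rw [tsum_mul_tsum_of_summable_norm]
  · refine tsum_congr fun p => ?_
    rw [mul_mul_mul_comm, ← Complex.exp_add]
    congr 2; push_cast; ring
  · simpa [norm_mul, norm_cexp_I_int] using hc
  · simpa [norm_mul, norm_cexp_I_int] using hd

lemma hilbertT_ofReal (f : ℝ → ℝ) (x : ℝ) :
    (hilbertT f x : ℂ) = ∑' n : ℤ, -Complex.I * ((n.sign : ℤ) : ℂ) * fourierC f n *
      Complex.exp (Complex.I * (n : ℂ) * (x : ℂ)) := by
  unfold hilbertT
  rw [← Complex.conj_eq_iff_re, Complex.conj_tsum, ← (Equiv.neg ℤ).tsum_eq]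
  refine tsum_congr fun n => ?_
  simp only [Equiv.neg_apply, fourierC_neg, map_mul, Complex.conj_conj, ← Complex.exp_conj,
    Complex.conj_I, map_neg, Int.sign_neg, map_intCast, Complex.conj_ofReal, Int.cast_neg]
  ring_nf

lemma summable_fourierC (u : ℝ → ℝ) (hu : ContDiff ℝ (⊤ : ℕ∞) u)
    (hper : ∀ θ : ℝ, u (θ + 2 * π) = u θ) (hmean : fourierC u 0 = 0) :
    Summable (fun n : ℤ => ‖fourierC u n‖) := by
  refine Summable.of_nonneg_of_le (fun n => norm_nonneg _) (fun n => ?_)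
    (summable_sq_fourierC u hu hper)
  rcases eq_or_ne n 0 with rfl | hn
  · simp [hmean]
  · apply le_mul_of_one_le_left (norm_nonneg _)
    have : (1 : ℤ) ≤ n ^ 2 := by
      have : 0 < n ^ 2 := by positivity
      omega
    exact_mod_cast this

lemma Fmagic_series (u : ℝ → ℝ) (hu : ContDiff ℝ (⊤ : ℕ∞) u)
    (hper : ∀ θ : ℝ, u (θ + 2 * π) = u θ) (hmean : fourierC u 0 = 0) (θ : ℝ) (a : ℤ → ℂ)
    (ha : ∀ n, a n = fourierC u n * Complex.exp (Complex.I * (n : ℂ) * (θ : ℂ))) :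
    Fmagic u θ = (∑' p : ℤ × ℤ, a p.1 * a p.2 * (p.2 : ℂ) ^ 2 *
        (1 - ((p.1 + p.2).sign : ℂ) * (p.2.sign : ℂ))).re := by
  have hs2 := summable_sq_fourierC u hu hper
  have hs0 := summable_fourierC u hu hper hmean
  have hc2 := fourierC_deriv2 u hu hper
  have hs2' : Summable (fun n : ℤ => ‖fourierC (deriv (deriv u)) n‖) := by
    refine hs2.congr fun n => ?_
    rw [hc2, norm_mul, norm_neg, norm_intCast_sq]
  have hse : Summable (fun n : ℤ => ‖-Complex.I * ((n.sign : ℤ) : ℂ) *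
      fourierC (deriv (deriv u)) n‖) := by
    refine Summable.of_nonneg_of_le (fun n => norm_nonneg _) (fun n => ?_) hs2'
    rw [norm_mul, norm_mul, norm_neg, Complex.norm_I, one_mul]
    exact mul_le_of_le_one_left (norm_nonneg _) (norm_sign_le n)
  have hux := fourier_inversion u hu.continuous hper hs0
  have hu2x := fourier_inversion (deriv (deriv u)) (contDiff_deriv' (contDiff_deriv' hu)).continuous
    (deriv_periodic _ (deriv_periodic u hper)) hs2'
  have hHx := hilbertT_ofReal (deriv (deriv u))
  have hd1 : Summable (fun p : ℤ × ℤ => ‖fourierC u p.1 * fourierC (deriv (deriv u)) p.2‖) := by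
    simpa only [norm_mul] using
      hs0.mul_of_nonneg hs2' (fun _ => norm_nonneg _) (fun _ => norm_nonneg _)
  have hd2 : Summable (fun p : ℤ × ℤ => ‖fourierC u p.1 * (-Complex.I * ((p.2.sign : ℤ) : ℂ) *
      fourierC (deriv (deriv u)) p.2)‖) := by
    have := hs0.mul_of_nonneg hse (fun _ => norm_nonneg _) (fun _ => norm_nonneg _)
    exact this.congr fun p => (norm_mul _ _).symm
  have h1 : u θ * deriv (deriv u) θ = (∑' p : ℤ × ℤ, fourierC u p.1 *
      fourierC (deriv (deriv u)) p.2 *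
      Complex.exp (Complex.I * ((p.1 + p.2 : ℤ) : ℂ) * (θ : ℂ))).re := by
    rw [← tsum_trig_mul _ _ hs0 hs2', ← hux, ← hu2x, ← Complex.ofReal_mul, Complex.ofReal_re]
  have h2 := hilbertT_of_tsum _ hd2 (fun p => p.1 + p.2)
    (fun x => u x * hilbertT (deriv (deriv u)) x) (fun x => by
      rw [Complex.ofReal_mul, hux, hHx, tsum_trig_mul _ _ hs0 hse]) θ
  unfold Fmagic
  rw [h1, h2, ← Complex.neg_re, ← Complex.sub_re]
  have hS1 := summable_trig hd1 (fun p => p.1 + p.2) θ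
  have hS2 : Summable (fun p : ℤ × ℤ => -Complex.I * (((p.1 + p.2).sign : ℤ) : ℂ) *
      (fourierC u p.1 * (-Complex.I * ((p.2.sign : ℤ) : ℂ) *
      fourierC (deriv (deriv u)) p.2)) *
      Complex.exp (Complex.I * ((p.1 + p.2 : ℤ) : ℂ) * (θ : ℂ))) := by
    apply Summable.of_norm_bounded hd2
    intro p
    rw [norm_mul, norm_cexp_I_int, mul_one, norm_mul (_ * _), norm_mul, norm_neg, Complex.norm_I,
      one_mul]
    exact mul_le_of_le_one_left (norm_nonneg _) (norm_sign_le _)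
  rw [← tsum_neg, ← hS1.neg.tsum_sub hS2]
  congr 1
  refine tsum_congr fun p => ?_
  have he : Complex.exp (Complex.I * ((p.1 + p.2 : ℤ) : ℂ) * (θ : ℂ)) =
      Complex.exp (Complex.I * (p.1 : ℂ) * (θ : ℂ)) *
      Complex.exp (Complex.I * (p.2 : ℂ) * (θ : ℂ)) := by
    rw [← Complex.exp_add]; congr 1; push_cast; ring
  rw [he, hc2, ha, ha]
  ring_nf
  rw [Complex.I_sq]
  ring

/-! ### The right hand side -/

lemma disc_integral (e : ℕ → ℂ) (he : Summable (fun j => ‖e j‖)) :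
    ∫ w in Metric.ball (0:ℂ) 1, ‖∑' j, e j * w ^ j‖ ^ 2
      = π * ∑' j : ℕ, ‖e j‖ ^ 2 / ((j : ℝ) + 1) := by
  have hesq : Summable (fun j => ‖e j‖ ^ 2) := by
    have h := he.mul_of_nonneg he (fun _ => norm_nonneg _) (fun _ => norm_nonneg _)
    have inj : Function.Injective (fun j : ℕ => (j, j)) := fun i j h => (Prod.ext_iff.1 h).1
    have := h.comp_injective inj
    exact this.congr fun j => (sq _).symm
  set h : ℝ × ℝ → ℝ := fun p => p.1 * ‖∑' j, e j * ((p.1 : ℂ) *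
    Complex.exp (Complex.I * (p.2 : ℂ))) ^ j‖ ^ 2 with hh
  have step1 : ∫ w in Metric.ball (0:ℂ) 1, ‖∑' j, e j * w ^ j‖ ^ 2
      = ∫ p in Set.Ioo (0:ℝ) 1 ×ˢ Set.Ioo (-π) π, h p := by
    rw [← integral_indicator Metric.isOpen_ball.measurableSet,
      ← Complex.integral_comp_polarCoord_symm, polarCoord_target]
    have : Set.Ioo (0:ℝ) 1 ×ˢ Set.Ioo (-π) π =
        (Set.Ioi (0:ℝ) ×ˢ Set.Ioo (-π) π) ∩ (Set.Iio (1:ℝ) ×ˢ Set.univ) := by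
      ext p
      simp only [Set.mem_prod, Set.mem_Ioo, Set.mem_inter_iff, Set.mem_Ioi, Set.mem_Iio,
        Set.mem_univ, and_true]
      tauto
    rw [this, ← setIntegral_indicator (measurableSet_Iio.prod MeasurableSet.univ)]
    apply setIntegral_congr_fun (measurableSet_Ioi.prod measurableSet_Ioo)
    rintro ⟨r, t⟩ ⟨hr, -⟩
    simp only [Set.mem_Ioi] at hr
    have hpol : Complex.polarCoord.symm (r, t) = (r : ℂ) * Complex.exp (Complex.I * (t : ℂ)) := by
      rw [Complex.polarCoord_symm_apply, mul_comm Complex.I, Complex.exp_mul_I]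
      push_cast; rfl
    have hn : ‖(r : ℂ) * Complex.exp (Complex.I * (t : ℂ))‖ = r := by
      rw [norm_mul, mul_comm Complex.I, Complex.norm_exp_ofReal_mul_I, mul_one, Complex.norm_real,
        Real.norm_of_nonneg hr.le]
    simp only [hpol]
    by_cases h1 : r < 1
    · rw [Set.indicator_of_mem (by rw [mem_ball_zero_iff, hn]; exact h1), Set.indicator_of_mem (by simpa using h1)]
      simp [hh]
    · rw [Set.indicator_of_notMem (by rw [mem_ball_zero_iff, hn]; exact h1),
        Set.indicator_of_notMem (by simpa using h1), smul_zero]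
  have hcont : ContinuousOn h (Set.Icc (0:ℝ) 1 ×ˢ Set.Icc (-π) π) := by
    apply ContinuousOn.mul continuousOn_fst
    apply ContinuousOn.pow
    apply ContinuousOn.norm
    apply continuousOn_tsum (u := fun j => ‖e j‖) _ he
    · rintro j ⟨r, t⟩ ⟨⟨hr0, hr1⟩, -⟩
      simp only at hr0 hr1
      rw [norm_mul, norm_pow, norm_mul, mul_comm Complex.I, Complex.norm_exp_ofReal_mul_I, mul_one,
        Complex.norm_real, Real.norm_of_nonneg hr0]
      exact mul_le_of_le_one_right (norm_nonneg _) (pow_le_one₀ hr0 hr1)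
    · intro j
      apply Continuous.continuousOn
      fun_prop
  have hIntegrable : IntegrableOn h (Set.Ioo (0:ℝ) 1 ×ˢ Set.Ioo (-π) π) :=
    (hcont.integrableOn_compact (isCompact_Icc.prod isCompact_Icc)).mono_set
      (Set.prod_mono Set.Ioo_subset_Icc_self Set.Ioo_subset_Icc_self)
  have step2 : ∀ r ∈ Set.Ioo (0:ℝ) 1, ∫ t in Set.Ioo (-π) π, h (r, t)
      = ∑' j : ℕ, 2 * π * ‖e j‖ ^ 2 * r ^ (2 * j + 1) := by
    intro r hr
    have hs : Summable (fun j => ‖e j * (r : ℂ) ^ j‖) := by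
      refine Summable.of_nonneg_of_le (fun n => norm_nonneg _) (fun n => ?_) he
      rw [norm_mul, norm_pow, Complex.norm_real, Real.norm_of_nonneg hr.1.le]
      exact mul_le_of_le_one_right (norm_nonneg _) (pow_le_one₀ hr.1.le hr.2.le)
    have hp := parseval_nat (fun j => e j * (r : ℂ) ^ j) hs (-π)
    have hpi : -π + 2 * π = π := by ring
    rw [hpi, intervalIntegral.integral_of_le (by linarith [Real.pi_pos]),
      integral_Ioc_eq_integral_Ioo] at hp
    simp only [hh]
    rw [integral_const_mul]
    simp_rw [mul_pow, ← mul_assoc]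
    rw [hp, ← mul_assoc, ← tsum_mul_left]
    refine tsum_congr fun j => ?_
    rw [norm_mul, norm_pow, Complex.norm_real, Real.norm_of_nonneg hr.1.le]
    ring
  have step3 := intervalIntegral.hasSum_integral_of_dominated_convergence (μ := volume)
    (a := 0) (b := 1)
    (F := fun (j : ℕ) (r : ℝ) => 2 * π * ‖e j‖ ^ 2 * r ^ (2 * j + 1))
    (f := fun r => ∑' j : ℕ, 2 * π * ‖e j‖ ^ 2 * r ^ (2 * j + 1))
    (fun j _ => 2 * π * ‖e j‖ ^ 2)
    (fun i => (by fun_prop : Continuous _).aestronglyMeasurable)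
    (fun j => Filter.Eventually.of_forall fun r hr => by
      rw [Set.uIoc_of_le zero_le_one] at hr
      have h0 := hr.1.le
      rw [Real.norm_of_nonneg (by positivity)]
      exact mul_le_of_le_one_right (by positivity) (pow_le_one₀ h0 hr.2))
    (Filter.Eventually.of_forall fun x _ => hesq.mul_left _)
    (by simp)
    (Filter.Eventually.of_forall fun r hr => by
      rw [Set.uIoc_of_le zero_le_one] at hr
      have h0 := hr.1.le
      apply Summable.hasSum
      refine Summable.of_nonneg_of_le (fun j => by positivity) (fun j => ?_)
        (hesq.mul_left (2 * π))
      exact mul_le_of_le_one_right (by positivity) (pow_le_one₀ h0 hr.2))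
  rw [step1, Measure.volume_eq_prod, setIntegral_prod _ hIntegrable,
    setIntegral_congr_fun measurableSet_Ioo step2, ← integral_Ioc_eq_integral_Ioo,
    ← intervalIntegral.integral_of_le zero_le_one, ← step3.tsum_eq, ← tsum_mul_left]
  refine tsum_congr fun j => ?_
  rw [intervalIntegral.integral_const_mul, integral_pow]
  push_cast
  have : (j : ℝ) + 1 ≠ 0 := by positivity
  field_simp
  ring

/-- The Taylor coefficients of `w ↦ Υ(w, z)`. -/
noncomputable def upsCoeff (c : ℕ → ℂ) (z : ℂ) (j : ℕ) : ℂ :=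
  ∑' n : ℕ, if j ≤ n then c n * z ^ (n - j) else 0

lemma summable_triangle (c : ℕ → ℂ) (hc : Summable (fun n : ℕ => ((n : ℝ) + 1) ^ 2 * ‖c n‖)) :
    Summable (fun p : ℕ × ℕ => if p.2 ≤ p.1 then ((p.2 : ℝ) + 1) * ‖c p.1‖ else 0) := by
  rw [summable_prod_of_nonneg (fun p => by dsimp only; split_ifs <;> positivity)]
  have key : ∀ n j : ℕ, j ∉ Finset.range (n + 1) →
      (if j ≤ n then ((j : ℝ) + 1) * ‖c n‖ else 0) = 0 := by
    intro n j hj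
    rw [Finset.mem_range] at hj
    rw [if_neg (by omega)]
  constructor
  · intro n
    exact summable_of_ne_finset_zero (s := Finset.range (n + 1)) (key n)
  · refine Summable.of_nonneg_of_le
      (fun n => tsum_nonneg fun _ => by split_ifs <;> positivity) (fun n => ?_) hc
    dsimp only
    rw [tsum_eq_sum (s := Finset.range (n + 1)) (key n)]
    calc _ ≤ ∑ j ∈ Finset.range (n + 1), ((n : ℝ) + 1) * ‖c n‖ := by
          apply Finset.sum_le_sum
          intro j hj
          split_ifs with h
          · gcongr
          · positivity
      _ = _ := by rw [Finset.sum_const, Finset.card_range, nsmul_eq_mul]; push_cast; ring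

lemma summable_upsCoeff (c : ℕ → ℂ) (hc : Summable (fun n : ℕ => ((n : ℝ) + 1) ^ 2 * ‖c n‖))
    (z : ℂ) (hz : ‖z‖ = 1) : Summable (fun j : ℕ => ((j : ℝ) + 1) * ‖upsCoeff c z j‖) := by
  have h : Summable (fun p : ℕ × ℕ => if p.1 ≤ p.2 then ((p.1 : ℝ) + 1) * ‖c p.2‖ else 0) :=
    (summable_triangle c hc).prod_symm.congr fun p => by
      by_cases hp : p.1 ≤ p.2 <;> simp [hp]
  rw [summable_prod_of_nonneg (fun p => by
    simp only [Pi.zero_apply]; split_ifs <;> positivity)] at h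
  refine Summable.of_nonneg_of_le (fun j => by positivity) (fun j => ?_) h.2
  have hj := h.1 j
  dsimp only at hj ⊢
  have hcast : ((j : ℝ) + 1) * ‖upsCoeff c z j‖ = ‖((j : ℂ) + 1) * upsCoeff c z j‖ := by
    rw [norm_mul]
    congr 1
    have : (j : ℂ) + 1 = (((j : ℝ) + 1 : ℝ) : ℂ) := by push_cast; rfl
    rw [this, Complex.norm_real, Real.norm_of_nonneg (by positivity)]
  rw [hcast]
  unfold upsCoeff
  rw [← tsum_mul_left]
  apply tsum_of_norm_bounded hj.hasSum
  intro n
  by_cases hjn : j ≤ n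
  · rw [if_pos hjn, if_pos hjn, norm_mul, norm_mul, norm_pow, hz, one_pow, mul_one]
    have : (j : ℂ) + 1 = (((j : ℝ) + 1 : ℝ) : ℂ) := by push_cast; rfl
    rw [this, Complex.norm_real, Real.norm_of_nonneg (by positivity)]
  · simp [hjn]

lemma norm_upsCoeff (c : ℕ → ℂ) (z : ℂ) (hz : ‖z‖ = 1) (j : ℕ) :
    ‖upsCoeff c z j‖ = ‖∑' n : ℕ, if j ≤ n then c n * z ^ (n + 1) else 0‖ := by
  have : ∑' n : ℕ, (if j ≤ n then c n * z ^ (n + 1) else 0) = z ^ (j + 1) * upsCoeff c z j := by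
    unfold upsCoeff
    rw [← tsum_mul_left]
    refine tsum_congr fun n => ?_
    split_ifs with h
    · have : n + 1 = (j + 1) + (n - j) := by omega
      rw [this, pow_add]; ring
    · simp
  rw [this, norm_mul, norm_pow, hz, one_pow, one_mul]

lemma ups_series (c : ℕ → ℂ) (hc : Summable (fun n : ℕ => ((n : ℝ) + 1) ^ 2 * ‖c n‖))
    (z w : ℂ) (hz : ‖z‖ = 1) (hw : ‖w‖ ≤ 1) (hne : w ≠ z) :
    ((∑' n : ℕ, c n * w ^ (n + 1)) - ∑' n : ℕ, c n * z ^ (n + 1)) / (w - z)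
      = ∑' j : ℕ, upsCoeff c z j * w ^ j := by
  have hc0 : Summable (fun n : ℕ => ‖c n‖) := by
    refine Summable.of_nonneg_of_le (fun n => norm_nonneg _) (fun n => ?_) hc
    apply le_mul_of_one_le_left (norm_nonneg _)
    nlinarith [(Nat.cast_nonneg n : (0:ℝ) ≤ n)]
  have hsum : ∀ v : ℂ, ‖v‖ ≤ 1 → Summable (fun n : ℕ => c n * v ^ (n + 1)) := by
    intro v hv
    apply Summable.of_norm_bounded hc0
    intro n
    rw [norm_mul, norm_pow]
    exact mul_le_of_le_one_right (norm_nonneg _) (pow_le_one₀ (norm_nonneg _) hv)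
  let D : ℕ → ℕ → ℂ := fun n j => if j ≤ n then c n * z ^ (n - j) * w ^ j else 0
  have hD : Summable (Function.uncurry D) := by
    apply Summable.of_norm_bounded (summable_triangle c hc)
    rintro ⟨n, j⟩
    simp only [Function.uncurry_apply_pair, D]
    split_ifs
    · rw [norm_mul, norm_mul, norm_pow, norm_pow, hz, one_pow, mul_one]
      calc ‖c n‖ * ‖w‖ ^ j ≤ ‖c n‖ * 1 := by
            gcongr; exact pow_le_one₀ (norm_nonneg _) hw
        _ ≤ _ := by
            rw [mul_comm]; gcongr
            have : (0:ℝ) ≤ j := Nat.cast_nonneg j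
            linarith
    · simp
  have hcomm := hD.tsum_comm
  have e1 : ∀ j, ∑' n, D n j = upsCoeff c z j * w ^ j := by
    intro j
    unfold upsCoeff
    rw [← tsum_mul_right]
    refine tsum_congr fun n => ?_
    simp only [D]
    split_ifs <;> simp
  have hwz : w - z ≠ 0 := sub_ne_zero.2 hne
  have e2 : ∀ n, ∑' j, D n j = (c n * w ^ (n + 1) - c n * z ^ (n + 1)) / (w - z) := by
    intro n
    rw [tsum_eq_sum (s := Finset.range (n + 1))]
    · have hg := (Commute.all w z).mul_geom_sum₂ (n + 1)
      rw [eq_div_iff hwz, ← mul_sub, ← hg, mul_comm (w - z), ← mul_assoc, Finset.mul_sum]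
      congr 1
      apply Finset.sum_congr rfl
      intro j hj
      rw [Finset.mem_range] at hj
      simp only [D]
      rw [if_pos (by omega), Nat.add_sub_cancel]
      ring
    · intro j hj
      rw [Finset.mem_range] at hj
      simp only [D]
      rw [if_neg (by omega)]
  simp_rw [e1, e2] at hcomm
  rw [hcomm, tsum_div_const, (hsum w hw).tsum_sub (hsum z hz.le)]

lemma deriv_series (b : ℕ → ℂ) (hb : Summable (fun j : ℕ => ((j : ℝ) + 1) * ‖b j‖))
    (w : ℂ) (hw : ‖w‖ < 1) :
    HasDerivAt (fun v => ∑' j : ℕ, b j * v ^ j)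
      (∑' j : ℕ, (((j : ℂ) + 1) * b (j + 1)) * w ^ j) w := by
  have hbnd : ∀ (j : ℕ) (v : ℂ), ‖v‖ ≤ 1 → ‖b j * ((j : ℂ) * v ^ (j - 1))‖
      ≤ ((j : ℝ) + 1) * ‖b j‖ := by
    intro j v hv
    rw [norm_mul, norm_mul, norm_pow, Complex.norm_natCast, mul_comm]
    gcongr
    calc (j : ℝ) * ‖v‖ ^ (j - 1) ≤ j * 1 := by
          gcongr; exact pow_le_one₀ (norm_nonneg _) hv
      _ ≤ _ := by linarith
  have h := hasDerivAt_tsum_of_isPreconnected (𝕜 := ℂ) (g := fun (j : ℕ) (v : ℂ) => b j * v ^ j)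
    (g' := fun (j : ℕ) (v : ℂ) => b j * ((j : ℂ) * v ^ (j - 1)))
    (t := Metric.ball (0 : ℂ) 1) (y₀ := 0) (y := w) hb Metric.isOpen_ball
    (convex_ball _ _).isPreconnected
    (fun j v _ => (hasDerivAt_pow j v).const_mul (b j))
    (fun j v hv => hbnd j v (by simpa using (mem_ball_zero_iff.1 hv).le))
    (by simp)
    (by
      apply summable_of_ne_finset_zero (s := {0})
      intro j hj
      simp at hj
      simp [hj])
    (by simpa using hw)
  have hs : Summable (fun j : ℕ => b j * ((j : ℂ) * w ^ (j - 1))) :=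
    Summable.of_norm_bounded hb (fun j => hbnd j w hw.le)
  rw [hs.tsum_eq_zero_add] at h
  refine h.congr_deriv ?_
  rw [Nat.cast_zero, zero_mul, mul_zero, zero_add]
  refine tsum_congr fun j => ?_
  rw [Nat.add_sub_cancel]
  push_cast; ring

/-- Explicit formula
`F(θ) = (1/π) ∫₀^{2π} |Υ(e^{iθ},e^{iψ})|² dψ + (4/π) ∬_𝔻 |∂_w Υ(w,e^{iθ})|² dA`. -/
theorem Fmagic_eq_difference_quotient_integrals (u : ℝ → ℝ)
    (hu : ContDiff ℝ (⊤ : ℕ∞) u)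
    (hper : ∀ θ : ℝ, u (θ + 2 * π) = u θ)
    (hmean : fourierC u 0 = 0) :
    ∀ θ : ℝ, Fmagic u θ =
      (1 / π) * (∫ ψ in (0:ℝ)..(2 * π),
          ‖UpsOf u (Complex.exp (Complex.I * (θ : ℂ))) (Complex.exp (Complex.I * (ψ : ℂ)))‖ ^ 2)
      + (4 / π) * ∫ w in Metric.ball (0:ℂ) 1,
          ‖deriv (fun w' => UpsOf u w' (Complex.exp (Complex.I * (θ : ℂ)))) w‖ ^ 2 := by
  intro θ
  set z : ℂ := Complex.exp (Complex.I * (θ : ℂ)) with hzdef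
  have hz : ‖z‖ = 1 := by
    rw [hzdef, mul_comm, Complex.norm_exp_ofReal_mul_I]
  set c : ℕ → ℂ := fun n => fourierC u ((n : ℤ) + 1) with hcdef
  have hsq := summable_sq_fourierC u hu hper
  have hc : Summable (fun n : ℕ => ((n : ℝ) + 1) ^ 2 * ‖c n‖) := by
    have inj : Function.Injective (fun n : ℕ => (n : ℤ) + 1) := fun i j h => by
      simpa using h
    have := hsq.comp_injective inj
    simpa [Function.comp_def] using this
  set b : ℕ → ℂ := upsCoeff c z with hbdef
  have hb : Summable (fun j : ℕ => ((j : ℝ) + 1) * ‖b j‖) := summable_upsCoeff c hc z hz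
  have hb0 : Summable (fun j : ℕ => ‖b j‖) := by
    refine Summable.of_nonneg_of_le (fun n => norm_nonneg _) (fun n => ?_) hb
    apply le_mul_of_one_le_left (norm_nonneg _)
    linarith [(Nat.cast_nonneg n : (0:ℝ) ≤ n)]
  -- the left hand side
  set a : ℤ → ℂ := fun n => fourierC u n * Complex.exp (Complex.I * (n : ℂ) * (θ : ℂ)) with hadef
  have hF := Fmagic_series u hu hper hmean θ a (fun n => rfl)
  have hid := full_identity a (by simp [hadef, hmean]) (by
      intro n
      simp only [hadef, fourierC_neg, map_mul, ← Complex.exp_conj, Complex.conj_I, map_intCast,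
        Complex.conj_ofReal, Int.cast_neg]
      ring_nf) (by
      refine hsq.congr fun n => ?_
      simp only [hadef, norm_mul, norm_cexp_I_int, mul_one])
  rw [← hF] at hid
  have hbn : ∀ j, ‖∑' n : ℕ, if j ≤ n then a ((n : ℤ) + 1) else 0‖ = ‖b j‖ := by
    intro j
    rw [hbdef, norm_upsCoeff c z hz]
    congr 1
    refine tsum_congr fun n => ?_
    have : a ((n : ℤ) + 1) = c n * z ^ (n + 1) := by
      simp only [hadef, hcdef, hzdef]
      rw [← Complex.exp_nat_mul]
      congr 2; push_cast; ring
    rw [this]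
  simp_rw [hbn] at hid
  -- the first integral
  have hI1 : ∫ ψ in (0:ℝ)..(2 * π), ‖UpsOf u z (Complex.exp (Complex.I * (ψ : ℂ)))‖ ^ 2
      = 2 * π * ∑' j, ‖b j‖ ^ 2 := by
    have hp := parseval_nat b hb0 0
    rw [zero_add] at hp
    rw [← hp]
    apply intervalIntegral.integral_congr_ae
    have hcount : (Set.range fun k : ℤ => θ + k * (2 * π)).Countable := Set.countable_range _
    filter_upwards [hcount.ae_notMem volume] with ψ hψ _
    have hne : Complex.exp (Complex.I * (ψ : ℂ)) ≠ z := by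
      intro h
      rw [hzdef, Complex.exp_eq_exp_iff_exists_int] at h
      obtain ⟨k, hk⟩ := h
      apply hψ
      refine ⟨k, ?_⟩
      have h2 : Complex.I * (ψ : ℂ) = Complex.I * ((θ + k * (2 * π) : ℝ) : ℂ) := by
        rw [hk]; push_cast; ring
      have h3 := mul_left_cancel₀ Complex.I_ne_zero h2
      exact (Complex.ofReal_injective h3).symm
    have hw : ‖Complex.exp (Complex.I * (ψ : ℂ))‖ ≤ 1 := by
      rw [mul_comm, Complex.norm_exp_ofReal_mul_I]
    rw [hbdef, ← ups_series c hc z _ hz hw hne]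
    unfold UpsOf PhiOf
    rw [if_neg hne.symm, ← neg_sub z, div_neg, ← neg_div, neg_sub]
  -- the second integral
  have hI2 : ∫ w in Metric.ball (0:ℂ) 1, ‖deriv (fun w' => UpsOf u w' z) w‖ ^ 2
      = π * ∑' j : ℕ, ((j : ℝ) + 1) * ‖b (j + 1)‖ ^ 2 := by
    have hcn : ∀ j : ℕ, ‖((j : ℂ) + 1) * b (j + 1)‖ = ((j : ℝ) + 1) * ‖b (j + 1)‖ := by
      intro j
      rw [norm_mul]
      congr 1
      have : (j : ℂ) + 1 = (((j : ℝ) + 1 : ℝ) : ℂ) := by push_cast; rfl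
      rw [this, Complex.norm_real, Real.norm_of_nonneg (by positivity)]
    have he : Summable (fun j : ℕ => ‖((j : ℂ) + 1) * b (j + 1)‖) := by
      have := (summable_nat_add_iff 1).2 hb
      refine Summable.of_nonneg_of_le (fun n => norm_nonneg _) (fun n => ?_) this
      rw [hcn]
      push_cast
      gcongr
      linarith
    have hd := disc_integral (fun j : ℕ => ((j : ℂ) + 1) * b (j + 1)) he
    have e : ∀ j : ℕ, ‖((j : ℂ) + 1) * b (j + 1)‖ ^ 2 / ((j : ℝ) + 1)
        = ((j : ℝ) + 1) * ‖b (j + 1)‖ ^ 2 := by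
      intro j
      rw [hcn]
      have : (j : ℝ) + 1 ≠ 0 := by positivity
      field_simp
    simp_rw [e] at hd
    rw [← hd]
    apply setIntegral_congr_fun Metric.isOpen_ball.measurableSet
    intro w hw
    have hw1 : ‖w‖ < 1 := by simpa using hw
    have heq : (fun w' => UpsOf u w' z) =ᶠ[nhds w] fun v => ∑' j : ℕ, b j * v ^ j := by
      filter_upwards [Metric.isOpen_ball.mem_nhds hw] with v hv
      have hv1 : ‖v‖ < 1 := by simpa using hv
      have hne : v ≠ z := by
        rintro rfl
        linarith
      rw [hbdef, ← ups_series c hc z v hz hv1.le hne]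
      unfold UpsOf PhiOf
      rw [if_neg hne]
    have := (deriv_series b hb w hw1).congr_of_eventuallyEq heq
    simp only
    rw [this.deriv]
  rw [hI1, hI2]
  have hs : Summable (fun j : ℕ => (2 * (j : ℝ) + 1) * ‖b j‖ ^ 2) := by
    have := hid.summable.mul_left (1 / 2)
    refine this.congr fun j => ?_
    ring
  have hs1 : Summable (fun j : ℕ => ‖b j‖ ^ 2) := by
    refine Summable.of_nonneg_of_le (fun n => by positivity) (fun n => ?_) hs
    apply le_mul_of_one_le_left (by positivity)
    linarith [(Nat.cast_nonneg n : (0:ℝ) ≤ n)]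
  have hs2 : Summable (fun j : ℕ => (j : ℝ) * ‖b j‖ ^ 2) := by
    refine Summable.of_nonneg_of_le (fun n => by positivity) (fun n => ?_) hs
    gcongr
    linarith [(Nat.cast_nonneg n : (0:ℝ) ≤ n)]
  have hshift : ∑' j : ℕ, ((j : ℝ) + 1) * ‖b (j + 1)‖ ^ 2 = ∑' j : ℕ, (j : ℝ) * ‖b j‖ ^ 2 := by
    rw [hs2.tsum_eq_zero_add]
    simp
  rw [hshift, ← hid.tsum_eq]
  have e3 : ∑' j : ℕ, 2 * ((2 * (j : ℝ) + 1) * ‖b j‖ ^ 2)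
      = 2 * ∑' j, ‖b j‖ ^ 2 + 4 * ∑' j : ℕ, (j : ℝ) * ‖b j‖ ^ 2 := by
    rw [← tsum_mul_left, ← tsum_mul_left, ← (hs1.mul_left 2).tsum_add (hs2.mul_left 4)]
    refine tsum_congr fun j => ?_
    ring
  rw [e3]
  have := Real.pi_ne_zero
  field_simp
end

section
/- Fourier coefficients of f′·H(f′): let f : S¹ → ℝ be smooth with Fourier series f(θ) = Σ_{n∈ℤ} f_n e^{inθ}. For k ≥ 2 set h_k = Σ_{n=1}^{k−1} n(k−n) f_n f_{k−n}. Then the k-th Fourier coefficient of the product f′·H(f′) equals i·h_k for k ≥ 2, equals −i·conj(h_{|k|}) for k ≤ −2, and equals 0 for k ∈ {−1, 0, 1}. -/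
open MeasureTheory Real

/-- The coefficient `h_k = Σ_{n=1}^{k−1} n (k−n) f_n f_{k−n}` built from the Fourier
coefficients of `f`. -/
noncomputable def hCoef (f : ℝ → ℝ) (k : ℤ) : ℂ :=
  ∑ n ∈ Finset.Ioo (0:ℤ) k, (n : ℂ) * ((k : ℂ) - (n : ℂ)) * fourierC f n * fourierC f (k - n)

lemma hasSum_congr_aux {u v : ℤ → ℂ} {a : ℂ} (h : ∀ n, u n = v n) (hv : HasSum v a) :
    HasSum u a := by
  rw [funext h]
  exact hv

lemma fc_def (g : ℝ → ℝ) (n : ℤ) : fourierC g n = (1 / (2 * π)) *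
    ∫ θ in (0:ℝ)..(2 * π), (g θ : ℂ) * Complex.exp (-Complex.I * (n : ℂ) * (θ : ℂ)) := rfl

lemma fc_conj (g : ℝ → ℝ) (n : ℤ) : (starRingEnd ℂ) (fourierC g n) = fourierC g (-n) := by
  unfold fourierC
  rw [map_mul, intervalIntegral.integral_of_le (by positivity),
    intervalIntegral.integral_of_le (by positivity), ← integral_conj]
  congr 1
  · simp [Complex.conj_ofNat]
  · congr 1
    ext θ
    rw [map_mul, ← Complex.exp_conj]
    simp

lemma fc_bound (g : ℝ → ℝ) (hg : Continuous g) : ∃ C : ℝ, 0 ≤ C ∧ ∀ n : ℤ, ‖fourierC g n‖ ≤ C := by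
  obtain ⟨M, hM⟩ := (isCompact_uIcc (a := (0:ℝ)) (b := 2 * π)).exists_bound_of_continuousOn
    hg.continuousOn
  have key : ∀ n : ℤ, ‖fourierC g n‖ ≤ ‖(1 / (2 * π) : ℂ)‖ * (M * |2 * π - 0|) := by
    intro n
    unfold fourierC
    rw [norm_mul]
    gcongr
    apply intervalIntegral.norm_integral_le_of_norm_le_const
    intro x hx
    have h1 : ‖Complex.exp (-Complex.I * (n : ℂ) * (x : ℂ))‖ = 1 := by
      rw [Complex.norm_exp]; simp
    rw [norm_mul, h1, mul_one, Complex.norm_real]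
    exact hM x (Set.uIoc_subset_uIcc hx)
  exact ⟨_, le_trans (norm_nonneg _) (key 0), key⟩

lemma exp_period (n : ℤ) : Complex.exp (-Complex.I * (n : ℂ) * ((2 * π : ℝ) : ℂ)) = 1 := by
  rw [Complex.exp_eq_one_iff]
  exact ⟨-n, by push_cast; ring⟩

lemma fc_deriv (g : ℝ → ℝ) (hg : ContDiff ℝ 1 g) (hper : ∀ θ : ℝ, g (θ + 2 * π) = g θ) (n : ℤ) :
    fourierC (deriv g) n = Complex.I * n * fourierC g n := by
  unfold fourierC
  have hd : ∀ x ∈ Set.uIcc (0:ℝ) (2 * π), HasDerivAt (fun x : ℝ => (g x : ℂ)) ((deriv g x : ℝ) : ℂ) x :=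
    fun x _ => ((hg.differentiable (by norm_num)) x).hasDerivAt.ofReal_comp
  have he : ∀ x ∈ Set.uIcc (0:ℝ) (2 * π),
      HasDerivAt (fun x : ℝ => Complex.exp (-Complex.I * (n : ℂ) * (x : ℂ)))
        (Complex.exp (-Complex.I * (n : ℂ) * (x : ℂ)) * (-Complex.I * (n : ℂ))) x := by
    intro x _
    have := ((hasDerivAt_id x).ofReal_comp.const_mul (-Complex.I * (n : ℂ))).cexp
    simpa using this
  have hc : Continuous (deriv g) := hg.continuous_deriv (by norm_num)
  have := intervalIntegral.integral_mul_deriv_eq_deriv_mul hd he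
    (Continuous.intervalIntegrable (by fun_prop) _ _)
    (Continuous.intervalIntegrable (by fun_prop) _ _)
  have h0 : g (2 * π) = g 0 := by simpa using hper 0
  rw [exp_period, h0] at this
  simp only [Complex.ofReal_zero, mul_zero, Complex.exp_zero, sub_self, zero_sub] at this
  have h2 : ∫ x in (0:ℝ)..(2 * π), (g x : ℂ) * (Complex.exp (-Complex.I * (n : ℂ) * (x : ℂ)) * (-Complex.I * (n : ℂ)))
      = (∫ x in (0:ℝ)..(2 * π), (g x : ℂ) * Complex.exp (-Complex.I * (n : ℂ) * (x : ℂ))) * (-Complex.I * (n : ℂ)) := by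
    rw [← intervalIntegral.integral_mul_const]
    congr 1; ext x; ring
  rw [h2] at this
  have h3 := neg_eq_iff_eq_neg.mpr this
  rw [← neg_eq_iff_eq_neg.mpr this]
  ring

lemma deriv_per (g : ℝ → ℝ) (hper : ∀ θ : ℝ, g (θ + 2 * π) = g θ) :
    ∀ θ : ℝ, deriv g (θ + 2 * π) = deriv g θ := by
  intro θ
  rw [← deriv_comp_add_const]
  congr 1
  ext x
  exact hper x

lemma smooth_deriv (g : ℝ → ℝ) (hg : ContDiff ℝ (⊤ : ℕ∞) g) : ContDiff ℝ (⊤ : ℕ∞) (deriv g) :=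
  (contDiff_infty_iff_deriv.mp hg).2

lemma fc_summable (f : ℝ → ℝ) (hf : ContDiff ℝ (⊤ : ℕ∞) f)
    (hper : ∀ θ : ℝ, f (θ + 2 * π) = f θ) :
    Summable (fun n : ℤ => ‖((|n| : ℤ) : ℂ) * fourierC f n‖) := by
  have s1 := smooth_deriv f hf
  have s2 := smooth_deriv _ s1
  have s3 := smooth_deriv _ s2
  have p1 := deriv_per f hper
  have p2 := deriv_per _ p1
  have le1 : (1 : WithTop ℕ∞) ≤ ((⊤ : ℕ∞) : WithTop ℕ∞) := by exact_mod_cast le_top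
  obtain ⟨C, hC0, hC⟩ := fc_bound _ s3.continuous
  refine Summable.of_nonneg_of_le (fun _ => norm_nonneg _) (fun n => ?_)
    ((Real.summable_one_div_int_pow (p := 2)).mpr (by norm_num) |>.mul_left C)
  have h := hC n
  rw [fc_deriv _ (s2.of_le le1) p2, fc_deriv _ (s1.of_le le1) p1, fc_deriv _ (hf.of_le le1) hper] at h
  simp only [norm_mul, Complex.norm_I, one_mul, Complex.norm_intCast] at h ⊢
  rcases eq_or_ne n 0 with rfl | hn
  · simp
  · have : (0:ℝ) < (n:ℝ) ^ 2 := by positivity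
    rw [mul_one_div, le_div_iff₀ this, ← sq_abs]
    push_cast
    rw [abs_abs]
    linarith [h]

lemma hilbert_deriv (f : ℝ → ℝ) (hf : ContDiff ℝ (⊤ : ℕ∞) f)
    (hper : ∀ θ : ℝ, f (θ + 2 * π) = f θ) (θ : ℝ) :
    ((hilbertT (deriv f) θ : ℝ) : ℂ) =
      ∑' n : ℤ, ((|n| : ℤ) : ℂ) * fourierC f n * Complex.exp (Complex.I * (n : ℂ) * (θ : ℂ)) := by
  have le1 : (1 : WithTop ℕ∞) ≤ ((⊤ : ℕ∞) : WithTop ℕ∞) := by exact_mod_cast le_top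
  have e : (fun n : ℤ => -Complex.I * ((n.sign : ℤ) : ℂ) * fourierC (deriv f) n *
    Complex.exp (Complex.I * (n : ℂ) * (θ : ℂ))) = fun n : ℤ => ((|n| : ℤ) : ℂ) * fourierC f n *
      Complex.exp (Complex.I * (n : ℂ) * (θ : ℂ)) := by
    ext n
    rw [fc_deriv _ (hf.of_le le1) hper, ← Int.sign_mul_self_eq_abs]
    push_cast
    linear_combination (-(n.sign : ℂ) * n * fourierC f n *
      Complex.exp (Complex.I * (n : ℂ) * (θ : ℂ))) * Complex.I_mul_I
  unfold hilbertT
  rw [e]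
  apply Complex.conj_eq_iff_re.mp
  rw [Complex.conj_tsum, ← (Equiv.neg ℤ).tsum_eq]
  congr 1
  ext n
  rw [map_mul, map_mul, fc_conj, ← Complex.exp_conj]
  simp

lemma fc_prod (f : ℝ → ℝ) (hf : ContDiff ℝ (⊤ : ℕ∞) f)
    (hper : ∀ θ : ℝ, f (θ + 2 * π) = f θ) (k : ℤ) :
    HasSum (fun n : ℤ => ((|n| : ℤ) : ℂ) * fourierC f n * fourierC (deriv f) (k - n))
      (fourierC (fun θ => deriv f θ * hilbertT (deriv f) θ) k) := by
  have s1 := smooth_deriv f hf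
  have hc : Continuous (deriv f) := s1.continuous
  have hs := fc_summable f hf hper
  obtain ⟨M, hM⟩ := (isCompact_uIcc (a := (0:ℝ)) (b := 2 * π)).exists_bound_of_continuousOn
    hc.continuousOn
  have nexp : ∀ (n : ℤ) (x : ℝ), ‖Complex.exp (Complex.I * (n : ℂ) * (x : ℂ))‖ = 1 := by
    intro n x
    rw [Complex.norm_exp]; simp
  have key := intervalIntegral.hasSum_integral_of_dominated_convergence (μ := volume)
    (a := (0:ℝ)) (b := 2 * π)
    (F := fun (n : ℤ) (θ : ℝ) => ((|n| : ℤ) : ℂ) * fourierC f n *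
      (((deriv f θ : ℝ) : ℂ) * Complex.exp (-Complex.I * ((k - n : ℤ) : ℂ) * (θ : ℂ))))
    (f := fun θ => ((deriv f θ * hilbertT (deriv f) θ : ℝ) : ℂ) *
      Complex.exp (-Complex.I * (k : ℂ) * (θ : ℂ)))
    (fun n _ => ‖((|n| : ℤ) : ℂ) * fourierC f n‖ * M)
    (fun n => Continuous.aestronglyMeasurable (by fun_prop))
    (fun n => Filter.Eventually.of_forall fun x hx => by
      have := nexp (-(k - n)) x
      rw [norm_mul, norm_mul ((deriv f x : ℝ) : ℂ), Complex.norm_real]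
      have e : -Complex.I * ((k - n : ℤ) : ℂ) * (x : ℂ)
        = Complex.I * ((-(k - n) : ℤ) : ℂ) * (x : ℂ) := by push_cast; ring
      rw [e, this, mul_one]
      gcongr
      exact hM x (Set.uIoc_subset_uIcc hx))
    (Filter.Eventually.of_forall fun x hx => hs.mul_right M)
    (by simp)
    (Filter.Eventually.of_forall fun x hx => by
      have hs2 : Summable (fun n : ℤ => ((|n| : ℤ) : ℂ) * fourierC f n *
          Complex.exp (Complex.I * (n : ℂ) * (x : ℂ))) := by
        apply Summable.of_norm
        refine hs.congr fun n => ?_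
        rw [norm_mul (_ * _) (Complex.exp _), nexp, mul_one]
      have h := hs2.hasSum
      rw [← hilbert_deriv f hf hper] at h
      have h2 := h.mul_left (((deriv f x : ℝ) : ℂ) * Complex.exp (-Complex.I * (k : ℂ) * (x : ℂ)))
      have hv : ((deriv f x * hilbertT (deriv f) x : ℝ) : ℂ) *
          Complex.exp (-Complex.I * (k : ℂ) * (x : ℂ)) =
          ((deriv f x : ℝ) : ℂ) * Complex.exp (-Complex.I * (k : ℂ) * (x : ℂ)) *
            ((hilbertT (deriv f) x : ℝ) : ℂ) := by push_cast; ring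
      rw [hv]
      refine hasSum_congr_aux (fun n => ?_) h2
      · have e : -Complex.I * ((k - n : ℤ) : ℂ) * (x : ℂ)
          = -Complex.I * (k : ℂ) * (x : ℂ) + Complex.I * (n : ℂ) * (x : ℂ) := by push_cast; ring
        rw [e, Complex.exp_add]
        ring)
  have key2 := key.mul_left (1 / (2 * π) : ℂ)
  refine hasSum_congr_aux (fun n => ?_) key2
  rw [fc_def (deriv f), intervalIntegral.integral_const_mul]
  ring

lemma fc_main (f : ℝ → ℝ) (hf : ContDiff ℝ (⊤ : ℕ∞) f)
    (hper : ∀ θ : ℝ, f (θ + 2 * π) = f θ) (k : ℤ) (hk : 0 ≤ k) :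
    fourierC (fun θ => deriv f θ * hilbertT (deriv f) θ) k = Complex.I * hCoef f k := by
  have le1 : (1 : WithTop ℕ∞) ≤ ((⊤ : ℕ∞) : WithTop ℕ∞) := by exact_mod_cast le_top
  have h1 := fc_prod f hf hper k
  have h2 := (Equiv.subLeft k).hasSum_iff.mpr h1
  have h3 := h1.add h2
  have h4 : HasSum (fun n : ℤ => ((|n| : ℤ) : ℂ) * fourierC f n * fourierC (deriv f) (k - n) +
      ((fun n : ℤ => ((|n| : ℤ) : ℂ) * fourierC f n * fourierC (deriv f) (k - n)) ∘
        (Equiv.subLeft k)) n)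
      (∑ n ∈ Finset.Ioo (0:ℤ) k, 2 * (Complex.I * ((n : ℂ) * ((k : ℂ) - (n : ℂ)) * fourierC f n *
        fourierC f (k - n)))) := by
    have e : ∀ n : ℤ, ((|n| : ℤ) : ℂ) * fourierC f n * fourierC (deriv f) (k - n) +
      ((fun n : ℤ => ((|n| : ℤ) : ℂ) * fourierC f n * fourierC (deriv f) (k - n)) ∘
        (Equiv.subLeft k)) n = ((|n| * (k - n) + |k - n| * n : ℤ) : ℂ) *
          (Complex.I * (fourierC f n * fourierC f (k - n))) := by
      intro n
      simp only [Function.comp, Equiv.subLeft_apply, fc_deriv _ (hf.of_le le1) hper,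
        sub_sub_cancel]
      push_cast
      ring
    have e2 : ∑ n ∈ Finset.Ioo (0:ℤ) k, 2 * (Complex.I * ((n : ℂ) * ((k : ℂ) - (n : ℂ)) *
        fourierC f n * fourierC f (k - n))) = ∑ n ∈ Finset.Ioo (0:ℤ) k,
        ((|n| * (k - n) + |k - n| * n : ℤ) : ℂ) *
          (Complex.I * (fourierC f n * fourierC f (k - n))) := by
      apply Finset.sum_congr rfl
      intro n hn
      rw [Finset.mem_Ioo] at hn
      rw [abs_of_pos hn.1, abs_of_pos (by omega : 0 < k - n)]
      push_cast
      ring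
    simp only [e]
    rw [e2]
    apply hasSum_sum_of_ne_finset_zero
    intro n hn
    rw [Finset.mem_Ioo] at hn
    have : |n| * (k - n) + |k - n| * n = 0 := by
      rcases le_or_gt n 0 with h | h
      · rw [abs_of_nonpos h, abs_of_nonneg (by omega : 0 ≤ k - n)]; ring
      · rw [abs_of_pos h, abs_of_nonpos (by omega : k - n ≤ 0)]; ring
    rw [this]
    simp
  have h5 := h3.unique h4
  rw [← Finset.mul_sum, ← Finset.mul_sum] at h5
  unfold hCoef
  linear_combination h5 / 2

/-- The Fourier coefficients of `f′·H(f′)`: the `k`-th coefficient equals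
`i h_k` for `k ≥ 2`, `−i conj(h_{|k|})` for `k ≤ −2`, and `0` for `|k| ≤ 1`. -/
theorem fourierC_deriv_mul_hilbert_deriv (f : ℝ → ℝ)
    (hf : ContDiff ℝ (⊤ : ℕ∞) f)
    (hper : ∀ θ : ℝ, f (θ + 2 * π) = f θ) :
    (∀ k : ℤ, 2 ≤ k →
      fourierC (fun θ => deriv f θ * hilbertT (deriv f) θ) k = Complex.I * hCoef f k) ∧
    (∀ k : ℤ, k ≤ -2 →
      fourierC (fun θ => deriv f θ * hilbertT (deriv f) θ) k
        = -Complex.I * (starRingEnd ℂ) (hCoef f (-k))) ∧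
    (∀ k : ℤ, k.natAbs ≤ 1 →
      fourierC (fun θ => deriv f θ * hilbertT (deriv f) θ) k = 0) := by

  refine ⟨fun k hk => fc_main f hf hper k (by omega), fun k hk => ?_, fun k hk => ?_⟩
  · have h := fc_main f hf hper (-k) (by omega)
    have h2 := fc_conj (fun θ => deriv f θ * hilbertT (deriv f) θ) (-k)
    rw [neg_neg, h] at h2
    rw [← h2, map_mul, Complex.conj_I]
  · have h0 : ∀ j : ℤ, 0 ≤ j → j ≤ 1 →
        fourierC (fun θ => deriv f θ * hilbertT (deriv f) θ) j = 0 := by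
      intro j hj hj1
      rw [fc_main f hf hper j hj]
      unfold hCoef
      have he : Finset.Ioo (0:ℤ) j = ∅ := by
        ext n
        simp only [Finset.mem_Ioo, Finset.notMem_empty, iff_false]
        omega
      rw [he]
      simp
    rcases le_or_gt 0 k with h | h
    · exact h0 k h (by omega)
    · have h2 := fc_conj (fun θ => deriv f θ * hilbertT (deriv f) θ) (-k)
      rw [neg_neg, h0 (-k) (by omega) (by omega)] at h2
      rw [← h2, map_zero]
end
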